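/- For every n ≥ 1, the characteristic polynomial of the matrix A_n equals ∏_μ (X² − π_μ), where the product is over all compositions μ = (μ_1,…,μ_t) of n and π_μ := ∏_{i=1}^{t} (μ_i + 1). Equivalently, the eigenvalues of A_n, counted with algebraic multiplicity, are the pairs ±√π_μ, one pair for each composition μ of n. -/

import Mathlib

/-!
Put `D_n = A_n - B_n`.  After the unipotent change of basis `[[1, 0], [-1, 1]]`,
the recursion for the pair `(A, D)` becomes
`A ↦ [[0, A], [2A - D, D]]`, `D ↦ [[0, 0], [A, 0]]`.
In this form one sees, by induction on `n`, that `A_n` and `D_n` can be simultaneously made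
block upper triangular (over `ℤ`), with `2 × 2` diagonal blocks
`[[0, α], [β, 0]]` for `A_n` and `[[0, 0], [δ, 0]]` for `D_n`, one pair of blocks for each
composition of `n`.  Indeed a pair of basis vectors with parameters `(α, β, δ)` gives rise to two
pairs, with parameters `(β, 2α, α)` and `(α, 2β - δ, β)`.  The first corresponds to prepending a
part `1` to the composition, the second to increasing its first part by `1`: if `m` is the first
part, then `m β = (m + 1) δ`, so the product `αβ` is multiplied by `2` in the first case and by
`(m + 2) / (m + 1)` in the second; hence `αβ = π_μ` throughout.
The block with parameters `(α, β, δ)` contributes the factor `X² - αβ` to the characteristic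
polynomial of `A_n`.  The carriers of the argument are `Paired.step` (triangularity),
`HeadRel.cons` and `HeadRel.incHead` (values of the parameters) and `exists_paired` (induction).
-/

open Finset

/-- Restriction of a subset of `Fin (n+1)` to `Fin n` (forgetting the top element). -/
def resSet {n : ℕ} (I : Finset (Fin (n + 1))) : Finset (Fin n) :=
  Finset.univ.filter (fun j : Fin n => Fin.castSucc j ∈ I)

mutual
  /-- The matrix `A_n`, rows/columns indexed by subsets of `{1,…,n}` (element `j`
  of `[n]` corresponds to `j-1 : Fin n`, i.e. anti-lexicographic/binary order). -/
  def Amat : (n : ℕ) → Matrix (Finset (Fin n)) (Finset (Fin n)) ℤ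
    | 0 => Matrix.of fun _ _ => 1
    | n + 1 => Matrix.of fun I J =>
        if Fin.last n ∈ I then
          if Fin.last n ∈ J then - Bmat n (resSet I) (resSet J)
          else Amat n (resSet I) (resSet J)
        else Amat n (resSet I) (resSet J)
  /-- The matrix `B_n`. -/
  def Bmat : (n : ℕ) → Matrix (Finset (Fin n)) (Finset (Fin n)) ℤ
    | 0 => Matrix.of fun _ _ => 1
    | n + 1 => Matrix.of fun I J =>
        if Fin.last n ∈ I then
          if Fin.last n ∈ J then - Bmat n (resSet I) (resSet J)
          else 0
        else Amat n (resSet I) (resSet J)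
end

/-- The Walsh-Hadamard matrix `H_n`. -/
def Hmat : (n : ℕ) → Matrix (Finset (Fin n)) (Finset (Fin n)) ℤ
  | 0 => Matrix.of fun _ _ => 1
  | n + 1 => Matrix.of fun I J =>
      if Fin.last n ∈ I ∧ Fin.last n ∈ J then - Hmat n (resSet I) (resSet J)
      else Hmat n (resSet I) (resSet J)

/-- The Möbius matrix `M_n` of the boolean lattice. -/
def Mobmat (n : ℕ) : Matrix (Finset (Fin n)) (Finset (Fin n)) ℤ :=
  Matrix.of fun I J => if I ⊆ J then (-1) ^ (J \ I).card else 0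

/-- The zeta matrix `Z_n` of the boolean lattice. -/
def Zetamat (n : ℕ) : Matrix (Finset (Fin n)) (Finset (Fin n)) ℤ :=
  Matrix.of fun I J => if I ⊆ J then 1 else 0

/-- The subset of `[n] = {1,…,n}` corresponding to a subset of `Fin n`. -/
def natSet {n : ℕ} (I : Finset (Fin n)) : Finset ℕ := Finset.image (fun j : Fin n => (j : ℕ) + 1) I

/-- The ordinal number of a subset in the anti-lexicographic order. -/
def ordFin {n : ℕ} (I : Finset (Fin n)) : ℕ := ∑ j ∈ I, 2 ^ (j : ℕ)

/-- The run (maximal interval of consecutive integers) of `I` containing `j`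
(empty if `j ∉ I`). -/
def runOf (I : Finset ℕ) (j : ℕ) : Finset ℕ :=
  I.filter (fun i => ∀ k ∈ Finset.Icc (min i j) (max i j), k ∈ I)

/-- The set of runs (maximal intervals of consecutive integers) of `I`. -/
def runsOf (I : Finset ℕ) : Finset (Finset ℕ) := I.image (runOf I)

/-- `P` is a prefix of the interval `R`: it consists of an initial segment of `R`. -/
def IsPrefixOf (P R : Finset ℕ) : Prop :=
  P ⊆ R ∧ ∀ i ∈ R, ∀ j ∈ P, i ≤ j → i ∈ P

open Matrix

/-! ### The recursion in block form -/

/-- Subsets of `Fin (n + 1)`, split according to whether they contain the top element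
(right summand) or not (left summand). -/
def splitTop (n : ℕ) :
    Finset (Fin (n + 1)) ≃ Finset (Fin n) ⊕ Finset (Fin n) where
  toFun I := if Fin.last n ∈ I then Sum.inr (resSet I) else Sum.inl (resSet I)
  invFun := Sum.elim (fun I => I.map Fin.castSuccEmb)
    (fun I => insert (Fin.last n) (I.map Fin.castSuccEmb))
  left_inv I := by
    by_cases h : Fin.last n ∈ I
    · simp only [h, if_true, Sum.elim_inr]
      ext j
      refine Fin.lastCases ?_ (fun i => ?_) j
      · simp [h]
      · simp [resSet, Fin.castSucc_ne_last]
    · simp only [h, if_false, Sum.elim_inl]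
      ext j
      refine Fin.lastCases ?_ (fun i => ?_) j
      · simp [h, Fin.castSucc_ne_last]
      · simp [resSet]
  right_inv x := by
    rcases x with I | I
    · have h : Fin.last n ∉ I.map Fin.castSuccEmb := by simp [Fin.castSucc_ne_last]
      simp only [Sum.elim_inl, h, if_false]
      congr 1
      ext j
      simp [resSet]
    · simp only [Sum.elim_inr, Finset.mem_insert_self, if_true]
      congr 1
      ext j
      simp [resSet, Fin.castSucc_ne_last]

lemma Amat_succ (n : ℕ) :
    Amat (n + 1) = (fromBlocks (Amat n) (Amat n) (Amat n) (-Bmat n)).submatrix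
      (splitTop n) (splitTop n) := by
  ext I J
  by_cases hI : Fin.last n ∈ I <;> by_cases hJ : Fin.last n ∈ J <;>
    simp [Amat, splitTop, hI, hJ]

lemma Bmat_succ (n : ℕ) :
    Bmat (n + 1) = (fromBlocks (Amat n) (Amat n) 0 (-Bmat n)).submatrix
      (splitTop n) (splitTop n) := by
  ext I J
  by_cases hI : Fin.last n ∈ I <;> by_cases hJ : Fin.last n ∈ J <;>
    simp [Bmat, splitTop, hI, hJ]

lemma Amat_sub_Bmat_succ (n : ℕ) :
    Amat (n + 1) - Bmat (n + 1) = (fromBlocks 0 0 (Amat n) 0).submatrix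
      (splitTop n) (splitTop n) := by
  rw [Amat_succ, Bmat_succ]
  ext I J
  simp only [Matrix.sub_apply, submatrix_apply]
  rcases splitTop n I with i | i <;> rcases splitTop n J with j | j <;> simp

/-! ### Simultaneous block triangularity -/

/-- `M` and `N`, with rows and columns indexed by pairs `(q, s)`, are block upper triangular for
the order on `Q` given by the injective rank function `r`, and their diagonal blocks at `q` are
`[[0, α q], [β q, 0]]` and `[[0, 0], [δ q, 0]]` (with `false` as the first index). -/
structure Paired {Q : Type*} (M N : Matrix (Q × Bool) (Q × Bool) ℤ) (r : Q → ℕ)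
    (α β δ : Q → ℤ) : Prop where
  inj : Function.Injective r
  triM : ∀ q s q' s', r q' < r q → M (q, s) (q', s') = 0
  triN : ∀ q s q' s', r q' < r q → N (q, s) (q', s') = 0
  diagM : ∀ q s, M (q, s) (q, s) = 0
  diagN : ∀ q s, N (q, s) (q, s) = 0
  upM : ∀ q, M (q, false) (q, true) = α q
  lowM : ∀ q, M (q, true) (q, false) = β q
  upN : ∀ q, N (q, false) (q, true) = 0
  lowN : ∀ q, N (q, true) (q, false) = δ q

/-- The re-pairing of the basis in the inductive step: the pair `(q, ε)` consists of the vector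
`(q, ε)` in the first copy of the old index set and the vector `(q, !ε)` in the second. -/
def repair (Q : Type*) : (Q × Bool) × Bool ≃ (Q × Bool) ⊕ (Q × Bool) where
  toFun x := bif x.2 then Sum.inr (x.1.1, !x.1.2) else Sum.inl x.1
  invFun := Sum.elim (fun y => (y, false)) (fun y => ((y.1, !y.2), true))
  left_inv := by rintro ⟨⟨q, _ | _⟩, _ | _⟩ <;> rfl
  right_inv := by rintro (⟨q, _ | _⟩ | ⟨q, _ | _⟩) <;> rfl

/-- The parameters after one step: `(q, true)` has `(β, 2α, α)`, and `(q, false)` has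
`(α, 2β - δ, β)`. -/
lemma Paired.step {Q : Type*} {M N : Matrix (Q × Bool) (Q × Bool) ℤ} {r : Q → ℕ}
    {α β δ : Q → ℤ} (h : Paired M N r α β δ) :
    Paired ((fromBlocks 0 M (2 • M - N) N).submatrix (repair Q) (repair Q))
      ((fromBlocks 0 0 M 0).submatrix (repair Q) (repair Q))
      (fun x => 2 * r x.1 + x.2.toNat)
      (fun x => bif x.2 then β x.1 else α x.1)
      (fun x => bif x.2 then 2 * α x.1 else 2 * β x.1 - δ x.1)
      (fun x => bif x.2 then α x.1 else β x.1) where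
  inj := by
    rintro ⟨q, ε⟩ ⟨q', ε'⟩ hq
    have h1 : r q = r q' := by
      cases ε <;> cases ε' <;> simp at hq <;> omega
    obtain rfl := h.inj h1
    cases ε <;> cases ε' <;> simp at hq ⊢
  triM := by
    rintro ⟨q, ε⟩ s ⟨q', ε'⟩ s' hlt
    rcases lt_trichotomy (r q') (r q) with h1 | h1 | h1
    · have hM := fun s s' => h.triM q s q' s' h1
      have hN := fun s s' => h.triN q s q' s' h1
      cases s <;> cases s' <;> simp [repair, hM, hN]
    · obtain rfl := h.inj h1
      cases ε <;> cases ε' <;> simp at hlt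
      cases s <;> cases s' <;> simp [repair, h.diagM, h.diagN, h.upN]
    · exfalso
      cases ε <;> cases ε' <;> simp at hlt <;> omega
  triN := by
    rintro ⟨q, ε⟩ s ⟨q', ε'⟩ s' hlt
    rcases lt_trichotomy (r q') (r q) with h1 | h1 | h1
    · have hM := fun s s' => h.triM q s q' s' h1
      cases s <;> cases s' <;> simp [repair, hM]
    · obtain rfl := h.inj h1
      cases ε <;> cases ε' <;> simp at hlt
      cases s <;> cases s' <;> simp [repair, h.diagM]
    · exfalso
      cases ε <;> cases ε' <;> simp at hlt <;> omega
  diagM := by rintro ⟨q, _ | _⟩ (_ | _) <;> simp [repair, h.diagN]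
  diagN := by rintro ⟨q, _ | _⟩ (_ | _) <;> simp [repair]
  upM := by rintro ⟨q, _ | _⟩ <;> simp [repair, h.upM, h.lowM]
  lowM := by rintro ⟨q, _ | _⟩ <;> simp [repair, h.upM, h.lowM, h.upN, h.lowN]
  upN := by rintro ⟨q, _ | _⟩ <;> simp [repair]
  lowN := by rintro ⟨q, _ | _⟩ <;> simp [repair, h.upM, h.lowM]

lemma Paired.submatrix {Q Q' : Type*} {M N : Matrix (Q × Bool) (Q × Bool) ℤ} {r : Q → ℕ}
    {α β δ : Q → ℤ} (h : Paired M N r α β δ) (f : Q' ≃ Q) :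
    Paired (M.submatrix (f.prodCongr (Equiv.refl Bool)) (f.prodCongr (Equiv.refl Bool)))
      (N.submatrix (f.prodCongr (Equiv.refl Bool)) (f.prodCongr (Equiv.refl Bool)))
      (r ∘ f) (α ∘ f) (β ∘ f) (δ ∘ f) where
  inj := h.inj.comp f.injective
  triM _ _ _ _ hlt := h.triM _ _ _ _ hlt
  triN _ _ _ _ hlt := h.triN _ _ _ _ hlt
  diagM _ _ := h.diagM _ _
  diagN _ _ := h.diagN _ _
  upM _ := h.upM _
  lowM _ := h.lowM _
  upN _ := h.upN _
  lowN _ := h.lowN _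

lemma Paired.charpoly {Q : Type*} [Fintype Q] [DecidableEq Q]
    {M N : Matrix (Q × Bool) (Q × Bool) ℤ} {r : Q → ℕ}
    {α β δ : Q → ℤ} (h : Paired M N r α β δ) :
    M.charpoly = ∏ q, (Polynomial.X ^ 2 - Polynomial.C (α q * β q)) := by
  have hb : M.BlockTriangular (fun x => r x.1) := by
    rintro ⟨q, s⟩ ⟨q', s'⟩ hlt
    exact h.triM _ _ _ _ hlt
  have himg : image (fun x : Q × Bool => r x.1) univ = image r univ := by
    ext a
    simp
  rw [hb.charpoly, himg, Finset.prod_image (fun _ _ _ _ hq => h.inj hq)]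
  refine Finset.prod_congr rfl fun q _ => ?_
  let e : {x : Q × Bool // r x.1 = r q} ≃ Fin 2 :=
    { toFun := fun x => bif x.1.2 then 1 else 0
      invFun := fun i => ⟨(q, i = 1), rfl⟩
      left_inv := by
        rintro ⟨⟨q', s⟩, hq⟩
        obtain rfl := h.inj hq
        cases s <;> simp
      right_inv := by
        intro i
        fin_cases i <;> simp }
  rw [← charpoly_reindex e, charpoly_fin_two]
  simp [trace_fin_two, det_fin_two, e, toSquareBlock_def, h.diagM, h.upM, h.lowM, sub_eq_add_neg]

/-! ### Compositions and the values of the parameters -/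

/-- Increase the first entry of a list by one. -/
def incHead : List ℕ → List ℕ
  | [] => []
  | m :: t => (m + 1) :: t

/-- The relation between the blocks `l` of a composition and the parameters of the corresponding
diagonal block: `αβ` is the product of the `μ_i + 1`, and `β : δ = (m + 1) : m`, where `m` is the
first part. -/
def HeadRel (l : List ℕ) (α β δ : ℤ) : Prop :=
  ∃ m t, l = m :: t ∧ α * β = (l.map (fun i : ℕ => (i : ℤ) + 1)).prod ∧
    (m : ℤ) * β = ((m : ℤ) + 1) * δ

lemma HeadRel.cons {l : List ℕ} {α β δ : ℤ} (h : HeadRel l α β δ) :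
    HeadRel (1 :: l) β (2 * α) α := by
  obtain ⟨m, t, rfl, h1, h2⟩ := h
  refine ⟨1, m :: t, rfl, ?_, by push_cast; ring⟩
  rw [List.map_cons, List.prod_cons, ← h1]
  push_cast
  ring

lemma HeadRel.incHead {l : List ℕ} {α β δ : ℤ} (h : HeadRel l α β δ) :
    HeadRel (incHead l) α (2 * β - δ) β := by
  obtain ⟨m, t, rfl, h1, h2⟩ := h
  have hm : (m : ℤ) + 1 ≠ 0 := by positivity
  refine ⟨m + 1, t, rfl, ?_, ?_⟩
  · simp only [_root_.incHead, List.map_cons, List.prod_cons] at h1 ⊢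
    apply mul_left_cancel₀ hm
    push_cast
    linear_combination α * h2 + ((m : ℤ) + 2) * h1
  · push_cast
    linear_combination h2

/-- Prepend a part `1` (for `true`), or increase the first part (for `false`). -/
def compStep (n : ℕ) (x : Composition (n + 1) × Bool) : Composition (n + 2) where
  blocks := bif x.2 then 1 :: x.1.blocks else incHead x.1.blocks
  blocks_pos := by
    obtain ⟨⟨l, hl, hs⟩, _ | _⟩ := x
    · cases l with
      | nil => simp at hs
      | cons m t =>
        intro i hi
        simp only [incHead, cond_false, List.mem_cons] at hi
        rcases hi with rfl | hi
        · omega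
        · exact hl (List.mem_cons_of_mem _ hi)
    · intro i hi
      simp only [cond_true, List.mem_cons] at hi
      rcases hi with rfl | hi
      · omega
      · exact hl hi
  blocks_sum := by
    obtain ⟨⟨l, hl, hs⟩, _ | _⟩ := x
    · cases l with
      | nil => simp at hs
      | cons m t =>
        simp only [incHead, cond_false, List.sum_cons] at hs ⊢
        omega
    · simp only [cond_true, List.sum_cons]
      omega

lemma compStep_bijective (n : ℕ) : Function.Bijective (compStep n) := by
  rw [Fintype.bijective_iff_injective_and_card]
  constructor
  · rintro ⟨⟨l, hl, hs⟩, ε⟩ ⟨⟨l', hl', hs'⟩, ε'⟩ h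
    have hb := congrArg Composition.blocks h
    cases l with
    | nil => simp at hs
    | cons m t =>
    cases l' with
    | nil => simp at hs'
    | cons m' t' =>
    have hm := hl (List.mem_cons_self (a := m) (l := t))
    have hm' := hl' (List.mem_cons_self (a := m') (l := t'))
    cases ε <;> cases ε' <;> simp [compStep, incHead] at hb ⊢
    · exact hb
    · omega
    · omega
    · exact hb
  · simp [composition_card, pow_succ]

/-! ### The induction -/

/-- `A_{n+1}` and `A_{n+1} - B_{n+1}` are simultaneously conjugate (via `P`, with inverse `P'`) to
matrices of the shape `Paired`, with blocks indexed by the compositions of `n + 1`. -/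
lemma exists_paired (n : ℕ) :
    ∃ (P : Matrix (Finset (Fin (n + 1))) (Composition (n + 1) × Bool) ℤ)
      (P' : Matrix (Composition (n + 1) × Bool) (Finset (Fin (n + 1))) ℤ)
      (M N : Matrix (Composition (n + 1) × Bool) (Composition (n + 1) × Bool) ℤ)
      (r : Composition (n + 1) → ℕ) (α β δ : Composition (n + 1) → ℤ),
      P * P' = 1 ∧ P' * P = 1 ∧ Amat (n + 1) * P = P * M ∧
      (Amat (n + 1) - Bmat (n + 1)) * P = P * N ∧
      Paired M N r α β δ ∧ ∀ μ : Composition (n + 1), HeadRel μ.blocks (α μ) (β μ) (δ μ) := by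
  induction n with
  | zero =>
    let c : Composition 1 := Composition.single 1 one_pos
    have hc : ∀ μ : Composition 1, μ = c := by
      have : Fintype.card (Composition 1) ≤ 1 := by simp [composition_card]
      exact fun μ => Fintype.card_le_one_iff.mp this μ c
    -- An index equivalence turning everything into matrices over `Unit ⊕ Unit`.
    let f : Finset (Fin 1) ≃ Unit ⊕ Unit :=
      (splitTop 0).trans (Equiv.sumCongr (Equiv.ofUnique _ _) (Equiv.ofUnique _ _))
    let g : Composition 1 × Bool ≃ Unit ⊕ Unit :=
      { toFun := fun x => bif x.2 then Sum.inr () else Sum.inl ()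
        invFun := Sum.elim (fun _ => (c, false)) (fun _ => (c, true))
        left_inv := by rintro ⟨μ, _ | _⟩ <;> simp [hc μ]
        right_inv := by rintro (_ | _) <;> rfl }
    have hA : Amat 1 = (fromBlocks 1 1 1 (-1)).submatrix f f := by
      rw [Amat_succ]
      ext I J
      simp only [submatrix_apply, f, Equiv.trans_apply]
      rcases splitTop 0 I with i | i <;> rcases splitTop 0 J with j | j <;> simp [Amat, Bmat]
    have hD : Amat 1 - Bmat 1 = (fromBlocks 0 0 1 0).submatrix f f := by
      rw [Amat_sub_Bmat_succ]
      ext I J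
      simp only [submatrix_apply, f, Equiv.trans_apply]
      rcases splitTop 0 I with i | i <;> rcases splitTop 0 J with j | j <;> simp [Amat]
    refine ⟨(fromBlocks 1 0 (-1) 1).submatrix f g, (fromBlocks 1 0 1 1).submatrix g f,
      (fromBlocks 0 1 (1 + 1) 0).submatrix g g, (fromBlocks 0 0 1 0).submatrix g g,
      fun _ => 0, fun _ => 1, fun _ => 2, fun _ => 1, ?_, ?_, ?_, ?_, ?_, ?_⟩
    · rw [submatrix_mul_equiv, fromBlocks_multiply]
      simp
    · rw [submatrix_mul_equiv, fromBlocks_multiply]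
      simp
    · rw [hA, submatrix_mul_equiv, submatrix_mul_equiv, fromBlocks_multiply, fromBlocks_multiply]
      simp
    · rw [hD, submatrix_mul_equiv, submatrix_mul_equiv, fromBlocks_multiply, fromBlocks_multiply]
      simp
    · constructor
      · intro μ ν _
        rw [hc μ, hc ν]
      · intro _ _ _ _ h
        exact absurd h (lt_irrefl _)
      · intro _ _ _ _ h
        exact absurd h (lt_irrefl _)
      · rintro μ (_ | _) <;> simp [g]
      · rintro μ (_ | _) <;> simp [g]
      · intro μ
        simp [g]
      · intro μ
        simp [g]
      · intro μ
        simp [g]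
      · intro μ
        simp [g]
    · intro μ
      rw [hc μ]
      exact ⟨1, [], rfl, by simp [c, Composition.single], by norm_num⟩
  | succ n ih =>
    obtain ⟨P, P', M, N, r, α, β, δ, hPP', hP'P, hA, hD, hMN, hv⟩ := ih
    let f : Composition (n + 2) ≃ Composition (n + 1) × Bool :=
      (Equiv.ofBijective _ (compStep_bijective n)).symm
    let g := (f.prodCongr (Equiv.refl Bool)).trans (repair (Composition (n + 1)))
    let σ := splitTop (n + 1)
    have hB : Bmat (n + 1) * P = P * M - P * N := by
      rw [← hA, ← hD, Matrix.sub_mul, sub_sub_cancel]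
    refine ⟨(fromBlocks P 0 (-P) P).submatrix σ g, (fromBlocks P' 0 P' P').submatrix g σ,
      (fromBlocks 0 M (2 • M - N) N).submatrix g g, (fromBlocks 0 0 M 0).submatrix g g,
      _, _, _, _, ?_, ?_, ?_, ?_, hMN.step.submatrix f, ?_⟩
    · rw [submatrix_mul_equiv, fromBlocks_multiply]
      simp [hPP']
    · rw [submatrix_mul_equiv, fromBlocks_multiply]
      simp [hP'P]
    · rw [Amat_succ, submatrix_mul_equiv, submatrix_mul_equiv, fromBlocks_multiply,
        fromBlocks_multiply]
      congr 1
      congr 1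
      · simp
      · simp [hA]
      · simp only [Matrix.mul_neg, Matrix.neg_mul, neg_neg, hA, hB, Matrix.mul_sub,
          Matrix.mul_smul, Matrix.mul_zero]
        abel
      · simp only [Matrix.neg_mul, hB, Matrix.mul_zero]
        abel
    · rw [Amat_sub_Bmat_succ, submatrix_mul_equiv, submatrix_mul_equiv, fromBlocks_multiply,
        fromBlocks_multiply]
      simp [hA, σ]
    · intro μ
      obtain ⟨⟨ν, ε⟩, rfl⟩ := (compStep_bijective n).2 μ
      have hf : f (compStep n (ν, ε)) = (ν, ε) :=
        (Equiv.ofBijective _ (compStep_bijective n)).symm_apply_apply (ν, ε)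
      simp only [Function.comp_apply, hf]
      cases ε
      · exact (hv ν).incHead
      · exact (hv ν).cons

/-- **G. Alon.** The characteristic polynomial of `A_n` is
`∏_μ (X² − π_μ)`, the product over all compositions `μ` of `n`, where
`π_μ = ∏ᵢ (μᵢ + 1)`. -/
theorem charpolyA (n : ℕ) (hn : 1 ≤ n) :
    (Amat n).charpoly =
      ∏ μ : Composition n,
        (Polynomial.X ^ 2 -
          Polynomial.C ((μ.blocks.map (fun i => (i : ℤ) + 1)).prod)) := by
  obtain ⟨n, rfl⟩ : ∃ k, n = k + 1 := ⟨n - 1, by omega⟩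
  obtain ⟨P, P', M, N, r, α, β, δ, hPP', hP'P, hA, -, hMN, hv⟩ := exists_paired n
  have hAM : Amat (n + 1) = P * (M * P') := by
    rw [← Matrix.mul_assoc, ← hA, Matrix.mul_assoc, hPP', Matrix.mul_one]
  have hcard : Fintype.card (Composition (n + 1) × Bool) =
      Fintype.card (Finset (Fin (n + 1))) := by
    simp [composition_card, pow_succ]
  rw [hAM, charpoly_mul_comm_of_le _ _ hcard.le, hcard, Nat.sub_self, pow_zero, one_mul,
    Matrix.mul_assoc, hP'P, Matrix.mul_one, hMN.charpoly]
  refine Finset.prod_congr rfl fun μ _ => ?_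
  obtain ⟨m, t, -, h, -⟩ := hv μ
  -- In the statement, the cast to `ℤ` is applied to the whole list of blocks, through the list monad.
  rw [h]
  simp [← List.map_eq_flatMap, Function.comp_def]
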